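/- arXiv:2510.05786 — 4 statements merged into one kernel-verified Lean document; each statement's English description precedes it below -/
import Mathlib

section
/- Let G = (V,E) be a DAMG, R a commutative ring, q : E → R a normalized weight function, A an R-module, v : V → A a value function with Möbius transform w = v' with respect to G, and W ⊆ V a set of weak elements for (G,v) (i.e. w(z) = 0 for all z ∈ W). Then: (1) the Möbius transform of the restriction v|_{V∖W} with respect to the projected DAMG G^{∖W} equals the restriction w|_{V∖W}; (2) the projection w^{∖W} equals w|_{V∖W}; (3) consequently the projected value function v^{∖W}(y) := Σ_{x ∈ Anc^{G^{∖W}}(y)} w^{∖W}(x) equals the restriction v|_{V∖W}. -/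
open scoped Classical

/-- A directed multigraph: finite sets of vertices/edges with tail and head maps. -/
structure MGraph (V E : Type*) where
  tl : E → V
  hd : E → V

namespace MGraph

variable {V E R A : Type*}

/-- `G` is a directed acyclic multigraph (DAMG) if it admits a topological ordering,
i.e. a linear (injective) order on the vertices such that tails precede heads. -/
def IsDAMG (G : MGraph V E) : Prop :=
  ∃ ord : V → ℕ, Function.Injective ord ∧ ∀ e : E, ord (G.tl e) < ord (G.hd e)

/-- `G.IsPath x y l` : the list of edges `l` is a directed path from `x` to `y`. -/
def IsPath (G : MGraph V E) : V → V → List E → Prop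
  | x, y, [] => x = y
  | x, y, e :: es => G.tl e = x ∧ G.IsPath (G.hd e) y es

/-- the set `E(x,y)` of edges from `x` to `y` -/
def edges (G : MGraph V E) (x y : V) : Set E := {e | G.tl e = x ∧ G.hd e = y}

/-- there is a directed path from `x` to `y` (possibly trivial) -/
def Reaches (G : MGraph V E) (x y : V) : Prop := ∃ l : List E, G.IsPath x y l

/-- ancestors of `y` (including `y`) -/
def anc (G : MGraph V E) (y : V) : Set V := {x | G.Reaches x y}

/-- descendants of `x` (including `x`) -/
def desc (G : MGraph V E) (x : V) : Set V := {y | G.Reaches x y}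

/-- parents of `y` -/
def pa (G : MGraph V E) (y : V) : Set V := {x | ∃ e : E, G.tl e = x ∧ G.hd e = y}

/-- roots (sources) of `G` -/
def roots (G : MGraph V E) : Set V := {x | G.pa x = ∅}

/-- leaves (sinks) of `G` -/
def leaves (G : MGraph V E) : Set V := {x | ∀ e : E, G.tl e ≠ x}

/-- `π(x,y)` : the number of directed paths from `x` to `y` -/
noncomputable def nPaths (G : MGraph V E) (x y : V) : ℕ :=
  {l : List E | G.IsPath x y l}.ncard

/-- `π(y)` : the number of directed paths from roots to `y` -/
noncomputable def nPathsRt (G : MGraph V E) (y : V) : ℕ :=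
  ∑ᶠ r ∈ G.roots, G.nPaths r y

/-- pairwise weight `q(x|y) := Σ_{e ∈ E(x,y)} q(e)` -/
noncomputable def pw [AddCommMonoid R] (G : MGraph V E) (q : E → R) (x y : V) : R :=
  ∑ᶠ e ∈ G.edges x y, q e

/-- a weight function is normalized if pairwise weights into any non-root sum to 1 -/
def Normalized [CommRing R] (G : MGraph V E) (q : E → R) : Prop :=
  ∀ y : V, y ∉ G.roots → (∑ᶠ x : V, G.pw q x y) = 1

/-- `w` is the Möbius transform (synergy function) of `v` w.r.t. `G` -/
def IsMoebiusTransform [AddCommGroup A] (G : MGraph V E) (v w : V → A) : Prop :=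
  ∀ x : V, w x = v x - ∑ᶠ y ∈ G.anc x \ {x}, w y

/-- `μ` is the Möbius function of `G` -/
def IsMoebiusFunction (G : MGraph V E) (μ : V → V → ℤ) : Prop :=
  (∀ x y : V, x ∉ G.anc y → μ x y = 0) ∧
  (∀ x : V, μ x x = 1) ∧
  (∀ x y : V, x ∈ G.anc y → x ≠ y →
    μ x y = -(∑ᶠ z ∈ (G.desc x ∩ G.anc y) \ {y}, μ x z))

/-- `s` is the total path weight function of the edge weight function `q` -/
def IsTotalWeight [CommRing R] (G : MGraph V E) (q : E → R) (s : V → V → R) : Prop :=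
  (∀ x y : V, y ∉ G.desc x → s x y = 0) ∧
  (∀ x : V, s x x = 1) ∧
  (∀ x y : V, y ∈ G.desc x → y ≠ x → s x y = ∑ᶠ z ∈ G.pa y, s x z * G.pw q z y)

/-- `τ : V → R` is the extension of a root weight function via the recursion
`τ(y) = Σ_{z ∈ Pa(y)} τ(z)·ς(z,y)` for non-roots `y` -/
def IsRootExtension [CommRing R] (G : MGraph V E) (ς : E → R) (τ : V → R) : Prop :=
  ∀ y : V, y ∉ G.roots → τ y = ∑ᶠ z ∈ G.pa y, τ z * G.pw ς z y

/-- the list of vertices visited by a path starting at `x` -/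
def pathVerts (G : MGraph V E) (x : V) (l : List E) : List V := x :: l.map G.hd

/-- `X` is a horizontal subset of `G` : every directed path from a root to a leaf
contains exactly one element of `X` -/
def Horizontal (G : MGraph V E) (X : Set V) : Prop :=
  ∀ r ∈ G.roots, ∀ lf ∈ G.leaves, ∀ p : List E, G.IsPath r lf p →
    (G.pathVerts r p).countP (fun v => decide (v ∈ X)) = 1

/-- the path uniform weight function `q_G(e) := π(t(e))/π(h(e))` -/
noncomputable def pathUniform (G : MGraph V E) : E → ℚ :=
  fun e => (G.nPathsRt (G.tl e) : ℚ) / (G.nPathsRt (G.hd e) : ℚ)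

/-- the unanimity value function centred at `y` -/
noncomputable def zeta [CommRing R] (G : MGraph V E) (y : V) : V → R :=
  fun x => if x ∈ G.desc y then (1 : R) else 0

/-! ### Projection onto the complement of a single element -/

/-- the edge type of the projection `G^{∖z}` :
old edges avoiding `z`, together with a new edge for every pair of edges through `z` -/
def proj1E (G : MGraph V E) (z : V) : Type _ :=
  {e : E // G.tl e ≠ z ∧ G.hd e ≠ z} ⊕
  {p : E × E // G.hd p.1 = z ∧ G.tl p.2 = z ∧ G.tl p.1 ≠ z ∧ G.hd p.2 ≠ z}

/-- the projection `G^{∖z}` of `G` onto the complement of `z` -/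
def proj1 (G : MGraph V E) (z : V) : MGraph {x : V // x ≠ z} (G.proj1E z) where
  tl := Sum.elim (fun e => ⟨G.tl e.1, e.2.1⟩) (fun p => ⟨G.tl p.1.1, p.2.2.2.1⟩)
  hd := Sum.elim (fun e => ⟨G.hd e.1, e.2.2⟩) (fun p => ⟨G.hd p.1.2, p.2.2.2.2⟩)

/-- the projected weight function `q^{∖z}` -/
def proj1Q [CommRing R] (G : MGraph V E) (z : V) (q : E → R) : G.proj1E z → R :=
  Sum.elim (fun e => q e.1) (fun p => q p.1.1 * q p.1.2)

/-- the single-element projection `w^{∖z}(x) := w(x) + q(x|z)·w(z)` of a synergy function -/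
noncomputable def wProjOne [CommRing R] [AddCommGroup A] [Module R A]
    (G : MGraph V E) (q : E → R) (w : V → A) (z : V) : {x : V // x ≠ z} → A :=
  fun x => w x.1 + G.pw q x.1 z • w z

/-! ### Projection onto the complement of a subset -/

/-- consecutive edges of the list compose -/
def IsChain (G : MGraph V E) : List E → Prop
  | [] => True
  | [_] => True
  | e :: e' :: es => G.hd e = G.tl e' ∧ G.IsChain (e' :: es)

/-- the interior vertices of a path (all visited vertices except the endpoints) -/
def interior (G : MGraph V E) : List E → List V
  | [] => []
  | [_] => []
  | e :: e' :: es => G.hd e :: G.interior (e' :: es)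

/-- an edge of the projection `G^{∖S}` : a nonempty directed path of `G` whose
interior vertices lie in `S` and whose endpoints lie outside `S`
(iterating `E^{∖z}(x,y) := E(x,y) ⊔ (E(x,z) × E(z,y))` over the elements of `S`) -/
structure ProjEdge (G : MGraph V E) (S : Set V) where
  first : E
  rest : List E
  chain : G.IsChain (first :: rest)
  tl_notin : G.tl first ∉ S
  hd_notin : G.hd ((first :: rest).getLast (List.cons_ne_nil _ _)) ∉ S
  interior_mem : ∀ v ∈ G.interior (first :: rest), v ∈ S

/-- the projection `G^{∖S}` of `G` onto the complement of the subset `S` -/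
def projG (G : MGraph V E) (S : Set V) : MGraph {x : V // x ∉ S} (G.ProjEdge S) where
  tl := fun p => ⟨G.tl p.first, p.tl_notin⟩
  hd := fun p => ⟨G.hd ((p.first :: p.rest).getLast (List.cons_ne_nil _ _)), p.hd_notin⟩

/-- the projected weight function `q^{∖S}` (weights multiply along collapsed paths) -/
def projQ [CommRing R] (G : MGraph V E) (S : Set V) (q : E → R) :
    G.ProjEdge S → R :=
  fun p => ((p.first :: p.rest).map q).prod

/-! ### Iterated one-element projections of pairwise weights and synergy functions -/

/-- one projection step on pairwise weights: `q^{∖z}(x|y) = q(x|y) + q(x|z)·q(z|y)` -/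
def pwStep [CommRing R] (Q : V → V → R) (z : V) : V → V → R :=
  fun x y => Q x y + Q x z * Q z y

/-- one projection step on a synergy function: `w^{∖z}(x) = w(x) + q(x|z)·w(z)` -/
def wStep [CommRing R] [AddCommGroup A] [Module R A]
    (Q : V → V → R) (w : V → A) (z : V) : V → A :=
  fun x => w x + Q x z • w z

/-- iterated one-element projections along a list of vertices -/
def projIter [CommRing R] [AddCommGroup A] [Module R A] :
    List V → (V → V → R) → (V → A) → ((V → V → R) × (V → A))
  | [], Q, w => (Q, w)
  | z :: zs, Q, w => projIter zs (pwStep Q z) (wStep Q w z)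

/-! ### Subgraph on a subset of vertices -/

/-- edges of `G` with both endpoints in `S` -/
def subE (G : MGraph V E) (S : Set V) : Type _ := {e : E // G.tl e ∈ S ∧ G.hd e ∈ S}

/-- the subgraph of `G` on the vertex subset `S` -/
def subgraph (G : MGraph V E) (S : Set V) : MGraph ↥S (G.subE S) where
  tl := fun e => ⟨G.tl e.1, e.2.1⟩
  hd := fun e => ⟨G.hd e.1, e.2.2⟩

/-- the canonical identification `(V∖{z})∖{u} ≃ (V∖{u})∖{z}` -/
def swapCompl (z u : V) (hzu : z ≠ u) :
    {y : {x : V // x ≠ z} // y ≠ ⟨u, Ne.symm hzu⟩} ≃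
      {y : {x : V // x ≠ u} // y ≠ ⟨z, hzu⟩} where
  toFun y := ⟨⟨y.1.1, fun h => y.2 (Subtype.ext h)⟩, fun h => y.1.2 (congrArg Subtype.val h)⟩
  invFun y := ⟨⟨y.1.1, fun h => y.2 (Subtype.ext h)⟩, fun h => y.1.2 (congrArg Subtype.val h)⟩
  left_inv y := rfl
  right_inv y := rfl

end MGraph

/-! A vertex outside `W` reaches another one in `G^{∖W}` exactly when it does so in `G`: cut a path
of `G` at its vertices outside `W`, each piece being an edge of `G^{∖W}`. Hence the ancestor sets of
`G^{∖W}` are those of `G` with `W` removed, and since `w` vanishes on `W`, the recursion defining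
the Möbius transform is inherited by the restriction to the complement of `W`. Acyclicity makes its
solution unique. Each projection step adds a multiple of `w z = 0`, so it leaves `w` unchanged. -/

section TransGenThrough

variable {α : Type*} {r : α → α → Prop} {S : Set α}

/-- The transitive closure of `r` along chains whose intermediate points lie in `S`; the endpoints
are arbitrary. For the parent relation of a multigraph and endpoints outside `S`, this is adjacency
in the projection onto the complement of `S`. -/
inductive TransGenThrough (r : α → α → Prop) (S : Set α) : α → α → Prop
  | single {a b : α} (hab : r a b) : TransGenThrough r S a b
  | head {a b c : α} (hab : r a b) (hb : b ∈ S) (hbc : TransGenThrough r S b c) :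
      TransGenThrough r S a c

theorem TransGenThrough.transGen {a b : α} (h : TransGenThrough r S a b) :
    Relation.TransGen r a b := by
  induction h with
  | single hab => exact .single hab
  | head hab _ _ ih => exact .head hab ih

theorem exists_notMem_of_reflTransGen {a : α} {c : {x // x ∉ S}} (h : Relation.ReflTransGen r a c) :
    ∃ b : {x // x ∉ S}, (a = b ∨ a ∈ S ∧ TransGenThrough r S a b) ∧
      Relation.ReflTransGen (fun x y : {x // x ∉ S} => TransGenThrough r S x y) b c := by
  induction h using Relation.ReflTransGen.head_induction_on with
  | refl => exact ⟨c, .inl rfl, .refl⟩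
  | @head a a' haa' _ ih =>
    obtain ⟨b, ha'b, hbc⟩ := ih
    have hab : TransGenThrough r S a b := by
      rcases ha'b with rfl | ⟨ha', ha'b⟩
      · exact .single haa'
      · exact .head haa' ha' ha'b
    by_cases ha : a ∈ S
    · exact ⟨b, .inr ⟨ha, hab⟩, hbc⟩
    · exact ⟨⟨a, ha⟩, .inl rfl, .head hab hbc⟩

theorem reflTransGen_transGenThrough_iff {a b : {x // x ∉ S}} :
    Relation.ReflTransGen (fun x y : {x // x ∉ S} => TransGenThrough r S x y) a b ↔
      Relation.ReflTransGen r a b := by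
  constructor
  · intro h
    induction h with
    | refl => exact .refl
    | tail _ hbc ih => exact ih.trans hbc.transGen.to_reflTransGen
  · intro h
    obtain ⟨a', haa' | ⟨ha, -⟩, ha'b⟩ := exists_notMem_of_reflTransGen h
    · rwa [Subtype.ext haa']
    · exact absurd ha a.2

end TransGenThrough

theorem finsum_mem_preimage_of_support_subset_range {α β M : Type*} [AddCommMonoid M] {g : β → α}
    (hg : g.Injective) {f : α → M} (hf : Function.support f ⊆ Set.range g) (s : Set α) :
    ∑ᶠ b ∈ g ⁻¹' s, f (g b) = ∑ᶠ a ∈ s, f a := by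
  rw [← finsum_mem_image hg.injOn, Set.image_preimage_eq_inter_range]
  apply finsum_mem_inter_support_eq
  rw [Set.inter_assoc, Set.inter_eq_right.mpr hf]

namespace MGraph

variable {V E R A : Type*} {G : MGraph V E}

theorem reaches_iff_reflTransGen {x y : V} :
    G.Reaches x y ↔ Relation.ReflTransGen (· ∈ G.pa ·) x y := by
  constructor
  · rintro ⟨l, hl⟩
    induction l generalizing x with
    | nil => exact hl ▸ .refl
    | cons e l ih => exact .head ⟨e, hl.1, rfl⟩ (ih hl.2)
  · intro h
    induction h using Relation.ReflTransGen.head_induction_on with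
    | refl => exact ⟨[], rfl⟩
    | head hab _ ih =>
      obtain ⟨e, rfl, rfl⟩ := hab
      obtain ⟨l, hl⟩ := ih
      exact ⟨e :: l, rfl, hl⟩

theorem mem_anc_self (G : MGraph V E) (x : V) : x ∈ G.anc x :=
  ⟨[], rfl⟩

section Projection

variable {S : Set V}

theorem transGenThrough_of_isChain {e : E} {l : List E} (hchain : G.IsChain (e :: l))
    (hint : ∀ u ∈ G.interior (e :: l), u ∈ S) :
    TransGenThrough (· ∈ G.pa ·) S (G.tl e)
      (G.hd ((e :: l).getLast (List.cons_ne_nil _ _))) := by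
  induction l generalizing e with
  | nil => exact .single ⟨e, rfl, rfl⟩
  | cons f l ih =>
    obtain ⟨he, hint⟩ := List.forall_mem_cons.mp hint
    refine .head ⟨e, rfl, rfl⟩ he ?_
    rw [hchain.1]
    exact ih hchain.2 hint

theorem exists_isChain_of_transGenThrough {x y : V}
    (h : TransGenThrough (· ∈ G.pa ·) S x y) :
    ∃ (e : E) (l : List E), G.tl e = x ∧
      G.hd ((e :: l).getLast (List.cons_ne_nil _ _)) = y ∧
      G.IsChain (e :: l) ∧ ∀ u ∈ G.interior (e :: l), u ∈ S := by
  induction h with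
  | single hab =>
    obtain ⟨e, he⟩ := hab
    exact ⟨e, [], he.1, he.2, trivial, List.forall_mem_nil _⟩
  | head hab hb _ ih =>
    obtain ⟨e, rfl, rfl⟩ := hab
    obtain ⟨f, l, hf, hlast, hchain, hint⟩ := ih
    exact ⟨e, f :: l, rfl, hlast, ⟨hf.symm, hchain⟩, List.forall_mem_cons.mpr ⟨hb, hint⟩⟩

theorem mem_pa_projG_iff {x y : {x // x ∉ S}} :
    x ∈ (G.projG S).pa y ↔ TransGenThrough (· ∈ G.pa ·) S x.1 y.1 := by
  constructor
  · rintro ⟨p, rfl, rfl⟩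
    exact transGenThrough_of_isChain p.chain p.interior_mem
  · intro h
    obtain ⟨e, l, hx, hy, hchain, hint⟩ := exists_isChain_of_transGenThrough h
    exact ⟨⟨e, l, hchain, hx ▸ x.2, hy ▸ y.2, hint⟩, Subtype.ext hx, Subtype.ext hy⟩

theorem reaches_projG_iff {x y : {x // x ∉ S}} :
    (G.projG S).Reaches x y ↔ G.Reaches x.1 y.1 := by
  simp only [reaches_iff_reflTransGen, mem_pa_projG_iff, reflTransGen_transGenThrough_iff]

theorem anc_projG (y : {x // x ∉ S}) : (G.projG S).anc y = Subtype.val ⁻¹' G.anc y.1 :=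
  Set.ext fun _ => reaches_projG_iff

end Projection

section Acyclic

theorem lt_of_transGen_pa {β : Type*} [Preorder β] {ord : V → β}
    (hord : ∀ e, ord (G.tl e) < ord (G.hd e)) {x y : V}
    (h : Relation.TransGen (· ∈ G.pa ·) x y) : ord x < ord y := by
  have hedge : ∀ {a b : V}, a ∈ G.pa b → ord a < ord b := by
    rintro _ _ ⟨e, rfl, rfl⟩
    exact hord e
  induction h with
  | single hxy => exact hedge hxy
  | tail _ hbc ih => exact ih.trans (hedge hbc)

theorem lt_of_mem_anc_of_ne {β : Type*} [Preorder β] {ord : V → β}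
    (hord : ∀ e, ord (G.tl e) < ord (G.hd e)) {x y : V} (hxy : x ∈ G.anc y) (hne : x ≠ y) :
    ord x < ord y :=
  lt_of_transGen_pa hord <|
    (Relation.reflTransGen_iff_eq_or_transGen.mp (reaches_iff_reflTransGen.mp hxy)).resolve_left
      hne.symm

theorem IsDAMG.finite_anc (hG : G.IsDAMG) (y : V) : (G.anc y).Finite := by
  obtain ⟨ord, hinj, hord⟩ := hG
  refine ((Set.finite_Iic (ord y)).preimage hinj.injOn).subset fun x hx => ?_
  change ord x ≤ ord y
  obtain rfl | hne := eq_or_ne x y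
  · exact le_rfl
  · exact (lt_of_mem_anc_of_ne hord hx hne).le

theorem IsDAMG.projG (hG : G.IsDAMG) (S : Set V) : (G.projG S).IsDAMG := by
  obtain ⟨ord, hinj, hord⟩ := hG
  refine ⟨fun x => ord x, hinj.comp Subtype.val_injective, fun p => ?_⟩
  exact lt_of_transGen_pa hord (mem_pa_projG_iff.mp ⟨p, rfl, rfl⟩).transGen

end Acyclic

section MoebiusTransform

variable [AddCommGroup A] {v w w' : V → A}

theorem IsMoebiusTransform.unique (hG : G.IsDAMG) (hw : G.IsMoebiusTransform v w)
    (hw' : G.IsMoebiusTransform v w') : w = w' := by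
  obtain ⟨ord, -, hord⟩ := hG
  funext x
  induction x using (measure ord).wf.induction with
  | _ x ih =>
    rw [hw x, hw' x]
    congr 1
    exact finsum_mem_congr rfl fun y hy => ih y (lt_of_mem_anc_of_ne hord hy.1 hy.2)

theorem IsMoebiusTransform.finsum_anc (hw : G.IsMoebiusTransform v w) {y : V}
    (hfin : (G.anc y).Finite) : ∑ᶠ x ∈ G.anc y, w x = v y := by
  have hy : y ∉ G.anc y \ {y} := Set.notMem_sdiff_of_mem rfl
  rw [← Set.insert_sdiff_self_of_mem (G.mem_anc_self y), finsum_mem_insert _ hy hfin.sdiff, hw y,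
    sub_add_cancel]

theorem IsMoebiusTransform.projG_of_eq_zero (hw : G.IsMoebiusTransform v w) {W : Set V}
    (hweak : ∀ z ∈ W, w z = 0) :
    (G.projG W).IsMoebiusTransform (fun x => v x) (fun x => w x) := by
  intro x
  have hsupp : Function.support w ⊆ Set.range (Subtype.val : {x // x ∉ W} → V) := fun z hz =>
    ⟨⟨z, fun hzW => hz (hweak z hzW)⟩, rfl⟩
  have hanc : (G.projG W).anc x \ {x} = Subtype.val ⁻¹' (G.anc x.1 \ {x.1}) := by
    rw [anc_projG, Set.preimage_sdiff, ← Set.image_singleton,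
      Set.preimage_image_eq _ Subtype.val_injective]
  rw [hanc, finsum_mem_preimage_of_support_subset_range Subtype.val_injective hsupp]
  exact hw x

end MoebiusTransform

theorem projIter_snd_of_eq_zero [CommRing R] [AddCommGroup A] [Module R A] {l : List V}
    (Q : V → V → R) {w : V → A} (hw : ∀ z ∈ l, w z = 0) : (projIter l Q w).2 = w := by
  induction l generalizing Q with
  | nil => rfl
  | cons z l ih =>
    obtain ⟨hz, hl⟩ := List.forall_mem_cons.mp hw
    have hstep : wStep Q w z = w := by
      funext x
      rw [wStep, hz, smul_zero, add_zero]
    rw [projIter, hstep]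
    exact ih _ hl

end MGraph

theorem moebius_weak_elements_general
    {V E R A : Type*} [CommRing R] [AddCommGroup A] [Module R A]
    (G : MGraph V E) (hG : G.IsDAMG) (Q : V → V → R)
    (v w : V → A) (hw : G.IsMoebiusTransform v w)
    (W : Set V) (hweak : ∀ z ∈ W, w z = 0)
    (lW : List V) (hmem : ∀ z : V, z ∈ lW ↔ z ∈ W) :
    (∀ w' : {x : V // x ∉ W} → A,
        (G.projG W).IsMoebiusTransform (fun x => v x.1) w' →
        ∀ x : {x : V // x ∉ W}, w' x = w x.1) ∧
    (∀ x : V, x ∉ W → (MGraph.projIter lW Q w).2 x = w x) ∧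
    (∀ y : {x : V // x ∉ W},
        (∑ᶠ x ∈ (G.projG W).anc y, (MGraph.projIter lW Q w).2 x.1) = v y.1) := by
  have hrestrict := hw.projG_of_eq_zero hweak
  have hiter : (MGraph.projIter lW Q w).2 = w :=
    MGraph.projIter_snd_of_eq_zero Q fun z hz => hweak z ((hmem z).mp hz)
  rw [hiter]
  exact ⟨fun w' hw' => congrFun (hw'.unique (hG.projG W) hrestrict), fun _ _ => rfl,
    fun y => hrestrict.finsum_anc ((hG.projG W).finite_anc y)⟩

/-- **Möbius transforms and projections ignore weak elements.**
Let `q` be a normalized weight function on the DAMG `G`, `w` the Möbius transform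
of `v`, and `W` a set of weak elements for `(G,v)` (enumerated by the duplicate-free
list `lW`; the order of the iterated one-element projections is immaterial). Then:
(1) the Möbius transform of the restriction `v|_{V∖W}` w.r.t. the projected DAMG
`G^{∖W}` equals the restriction `w|_{V∖W}`;
(2) the projection `w^{∖W}` equals the restriction `w|_{V∖W}`;
(3) the projected value function `v^{∖W}(y) := Σ_{x ∈ Anc^{G^{∖W}}(y)} w^{∖W}(x)`
equals the restriction `v|_{V∖W}`. -/
theorem moebius_weak_elements
    {V E R A : Type*} [Finite V] [Finite E] [CommRing R] [AddCommGroup A] [Module R A]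
    (G : MGraph V E) (hG : G.IsDAMG)
    (q : E → R) (hq : G.Normalized q)
    (v w : V → A) (hw : G.IsMoebiusTransform v w)
    (W : Set V) (hweak : ∀ z ∈ W, w z = 0)
    (lW : List V) (hnd : lW.Nodup) (hmem : ∀ z : V, z ∈ lW ↔ z ∈ W) :
    (∀ w' : {x : V // x ∉ W} → A,
        (G.projG W).IsMoebiusTransform (fun x => v x.1) w' →
        ∀ x : {x : V // x ∉ W}, w' x = w x.1) ∧
    (∀ x : V, x ∉ W → (MGraph.projIter lW (G.pw q) w).2 x = w x) ∧
    (∀ y : {x : V // x ∉ W},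
        (∑ᶠ x ∈ (G.projG W).anc y, (MGraph.projIter lW (G.pw q) w).2 x.1) = v y.1) := by
  exact moebius_weak_elements_general G hG (G.pw q) v w hw W hweak lW hmem
end

section
/- Let G = (V,E) be a DAMG, R a commutative ring, ς : E → R an edge weight function with total path weight function σ, and τ : Rt(G) → R a root weight function extended to τ : V → R; assume τ(y) is a unit of R for every y ∈ V. Define the induced projection weight function q : E → R by q(e) := τ(t(e)) · τ(h(e))⁻¹ · ς(e), and let s be the total path weight function of q. Then for all x, y ∈ V: s(x|y) = τ(x) · τ(y)⁻¹ · σ(x,y). -/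
open scoped Classical

/-!
Along a path from `x` to `y` the factors `τ(t(e)) · τ(h(e))⁻¹` telescope to `τ(x) · τ(y)⁻¹`.
On the level of the defining recursions, the rescaled function `τ(x) · τ(y)⁻¹ · σ(x,y)` satisfies
the recursion for the total path weights of `q`, because `τ(z)⁻¹` and `τ(z)` cancel in each
summand; well-founded induction along the parent relation shows that this recursion has only one
solution.
-/

theorem mul_finsum_mem_of_isUnit {ι R : Type*} [Semiring R] {u : R} (hu : IsUnit u)
    (s : Set ι) (f : ι → R) : u * ∑ᶠ i ∈ s, f i = ∑ᶠ i ∈ s, u * f i := by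
  obtain ⟨u, rfl⟩ := hu
  let mulLeft : R ≃+ R := (AddAut.mulLeft u).toAdd
  exact (mulLeft.map_finsum _).trans (finsum_congr fun _ => mulLeft.map_finsum _)

namespace MGraph

variable {V E R : Type*}

/-- The induced projection weight function `q(e) = τ(t(e)) · τ(h(e))⁻¹ · ς(e)` of an edge weight
function `ς`, for an arbitrary vertex weight function `τ`. The inverse is `Ring.inverse`, which
takes the value `0` at non-units. -/
noncomputable def inducedProjection [MonoidWithZero R] (G : MGraph V E) (τ : V → R) (ς : E → R) :
    E → R :=
  fun e => τ (G.tl e) * Ring.inverse (τ (G.hd e)) * ς e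

theorem IsDAMG.wellFounded_pa {G : MGraph V E} (hG : G.IsDAMG) :
    WellFounded fun z y => z ∈ G.pa y := by
  obtain ⟨ord, -, ord_lt⟩ := hG
  refine Subrelation.wf ?_ (InvImage.wf ord wellFounded_lt)
  rintro _ _ ⟨e, rfl, rfl⟩
  exact ord_lt e

theorem pw_inducedProjection [Semiring R] (G : MGraph V E) {τ : V → R} (ς : E → R) {x y : V}
    (hx : IsUnit (τ x)) (hy : IsUnit (τ y)) :
    G.pw (G.inducedProjection τ ς) x y = τ x * Ring.inverse (τ y) * G.pw ς x y := by
  unfold pw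
  rw [mul_finsum_mem_of_isUnit (hx.mul hy.ringInverse)]
  refine finsum_mem_congr rfl ?_
  rintro e ⟨rfl, rfl⟩
  rfl

namespace IsTotalWeight

variable [CommRing R] {G : MGraph V E}

theorem unique (hG : WellFounded fun z y => z ∈ G.pa y) {q : E → R} {s s' : V → V → R}
    (hs : G.IsTotalWeight q s) (hs' : G.IsTotalWeight q s') : s = s' := by
  obtain ⟨s_zero, s_self, s_rec⟩ := hs
  obtain ⟨s'_zero, s'_self, s'_rec⟩ := hs'
  ext x y
  induction y using hG.induction with
  | _ y ih =>
    by_cases hxy : y ∈ G.desc x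
    · obtain rfl | hne := eq_or_ne y x
      · rw [s_self, s'_self]
      · rw [s_rec x y hxy hne, s'_rec x y hxy hne]
        exact finsum_mem_congr rfl fun z hz => by rw [ih z hz]
    · rw [s_zero x y hxy, s'_zero x y hxy]

theorem inducedProjection {ς : E → R} {σ : V → V → R} (hσ : G.IsTotalWeight ς σ) {τ : V → R}
    (hτ : ∀ y, IsUnit (τ y)) :
    G.IsTotalWeight (G.inducedProjection τ ς) fun x y => τ x * Ring.inverse (τ y) * σ x y := by
  obtain ⟨σ_zero, σ_self, σ_rec⟩ := hσ
  refine ⟨fun x y hxy => ?_, fun x => ?_, fun x y hxy hne => ?_⟩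
  · simp only [σ_zero x y hxy, mul_zero]
  · simp only [σ_self, mul_one, Ring.mul_inverse_cancel _ (hτ x)]
  · have cancel (z : V) :
        τ x * Ring.inverse (τ y) * (σ x z * G.pw ς z y) =
          τ x * Ring.inverse (τ z) * σ x z * (τ z * Ring.inverse (τ y) * G.pw ς z y) := by
      linear_combination
        -(τ x * Ring.inverse (τ y) * σ x z * G.pw ς z y) * Ring.inverse_mul_cancel _ (hτ z)
    calc
      τ x * Ring.inverse (τ y) * σ x y
          = ∑ᶠ z ∈ G.pa y, τ x * Ring.inverse (τ y) * (σ x z * G.pw ς z y) := by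
        rw [σ_rec x y hxy hne, mul_finsum_mem_of_isUnit ((hτ x).mul (hτ y).ringInverse)]
      _ = ∑ᶠ z ∈ G.pa y, τ x * Ring.inverse (τ z) * σ x z *
            G.pw (G.inducedProjection τ ς) z y := by
        simp only [cancel, pw_inducedProjection G ς (hτ _) (hτ _)]

end IsTotalWeight

end MGraph

theorem induced_projection_total_weights_general {V E R : Type*} [CommRing R]
    (G : MGraph V E) (hG : WellFounded fun z y => z ∈ G.pa y)
    (ς : E → R) (σ : V → V → R) (hσ : G.IsTotalWeight ς σ)
    (τ : V → R) (hunit : ∀ y : V, IsUnit (τ y))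
    (s : V → V → R) (hs : G.IsTotalWeight (G.inducedProjection τ ς) s) :
    ∀ x y : V, s x y = τ x * Ring.inverse (τ y) * σ x y :=
  fun x y => congrFun₂ (hs.unique hG (hσ.inducedProjection hunit)) x y

/-- **Total path weights of the induced projection weights.**
Let `ς` be an edge weight function with total path weight function `σ`, and let
`τ : V → R` be the extension of a root weight function, all of whose values are
units. Define the induced projection weight function `q(e) := τ(t(e))·τ(h(e))⁻¹·ς(e)`
and let `s` be its total path weight function. Then
`s(x|y) = τ(x)·τ(y)⁻¹·σ(x,y)` for all `x, y ∈ V`. -/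
theorem induced_projection_total_weights
    {V E R : Type*} [Finite V] [Finite E] [CommRing R]
    (G : MGraph V E) (hG : G.IsDAMG)
    (ς : E → R) (σ : V → V → R) (hσ : G.IsTotalWeight ς σ)
    (τ : V → R) (hτ : G.IsRootExtension ς τ) (hunit : ∀ y : V, IsUnit (τ y))
    (s : V → V → R)
    (hs : G.IsTotalWeight (fun e => τ (G.tl e) * Ring.inverse (τ (G.hd e)) * ς e) s) :
    ∀ x y : V, s x y = τ x * Ring.inverse (τ y) * σ x y :=
  induced_projection_total_weights_general G hG.wellFounded_pa ς σ hσ τ hunit s hs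
end

section
/- Let G = (V,E) be a DAMG, z ∈ V, and G^{∖z} the projection of G onto V∖{z}. Then for all x, y ∈ V∖{z} there is a bijection between the set of directed paths from x to y in G and the set of directed paths from x to y in G^{∖z} (replacing each occurrence of a consecutive pair of edges u→z→t by the corresponding new edge u→t). Consequently, for all x, y ∈ V∖{z}: Anc^{G^{∖z}}(y) = Anc^G(y)∖{z}, Desc^{G^{∖z}}(x) = Desc^G(x)∖{z}, and π^{G^{∖z}}(x,y) = π^G(x,y). -/
open scoped Classical

/-!
Replacing each new edge of `G^{∖z}` by the pair of edges it stands for turns paths of `G^{∖z}` into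
paths of `G`. A list of edges of `G` can be decoded in at most one way, since whether its first edge
has head `z` tells whether that edge came from an old edge or is the first half of a new one. If `z`
carries no loop, a path of `G` between vertices other than `z` leaves `z` immediately each time it
enters it, so it can be decoded.
-/

namespace MGraph

section Projection

variable {V E : Type*} (G : MGraph V E) (z : V)

/-- The path of `G` that an edge of the projection `G^{∖z}` stands for: an old edge by itself, or
the two edges through `z` making up a new edge. -/
def expandEdge : G.proj1E z → List E
  | Sum.inl e => [e.1]
  | Sum.inr p => [p.1.1, p.1.2]

/-- The expansion of a list of edges of the projection `G^{∖z}` into edges of `G`; on directed paths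
it is the inverse of the replacement of pairs `u → z → t` by new edges `u → t`. -/
def expand (m : List (G.proj1E z)) : List E :=
  m.flatMap (G.expandEdge z)

variable {G z}

theorem expandEdge_ne_nil : ∀ a : G.proj1E z, G.expandEdge z a ≠ []
  | Sum.inl _ => List.cons_ne_nil _ _
  | Sum.inr _ => List.cons_ne_nil _ _

theorem expand_cons (a : G.proj1E z) (m : List (G.proj1E z)) :
    G.expand z (a :: m) = G.expandEdge z a ++ G.expand z m :=
  List.flatMap_cons

theorem expandEdge_append_inj {a b : G.proj1E z} {k l : List E}
    (h : G.expandEdge z a ++ k = G.expandEdge z b ++ l) : a = b ∧ k = l := by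
  rcases a with ⟨e, he⟩ | ⟨⟨e, f⟩, hef⟩ <;> rcases b with ⟨e', he'⟩ | ⟨⟨e', f'⟩, hef'⟩ <;>
    simp only [expandEdge, List.cons_append, List.nil_append, List.cons.injEq] at h
  · obtain ⟨rfl, rfl⟩ := h
    exact ⟨rfl, rfl⟩
  · exact absurd (h.1 ▸ hef'.1) he.2
  · exact absurd (h.1 ▸ hef.1) he'.2
  · obtain ⟨rfl, rfl, rfl⟩ := h
    exact ⟨rfl, rfl⟩

theorem expand_injective : Function.Injective (G.expand z)
  | [], [], _ => rfl
  | [], b :: n, h => by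
    rw [expand_cons] at h
    exact absurd (List.append_eq_nil_iff.mp h.symm).1 (expandEdge_ne_nil b)
  | a :: m, [], h => by
    rw [expand_cons] at h
    exact absurd (List.append_eq_nil_iff.mp h).1 (expandEdge_ne_nil a)
  | a :: m, b :: n, h => by
    rw [expand_cons, expand_cons] at h
    obtain ⟨rfl, hmn⟩ := expandEdge_append_inj h
    rw [expand_injective hmn]

theorem isPath_expandEdge_append {a : G.proj1E z} {l : List E} {x y : V} :
    G.IsPath x y (G.expandEdge z a ++ l) ↔
      ((G.proj1 z).tl a : V) = x ∧ G.IsPath ((G.proj1 z).hd a) y l := by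
  rcases a with e | ⟨⟨e, f⟩, he, hf, -, -⟩
  · exact Iff.rfl
  · exact and_congr_right fun _ => and_iff_right (hf.trans he.symm)

theorem isPath_expand {m : List (G.proj1E z)} {x y : {v : V // v ≠ z}} :
    G.IsPath x y (G.expand z m) ↔ (G.proj1 z).IsPath x y m := by
  induction m generalizing x with
  | nil => exact Subtype.ext_iff.symm
  | cons a m ih =>
    rw [expand_cons, isPath_expandEdge_append, ih, ← Subtype.ext_iff]
    rfl

theorem IsPath.exists_eq_expandEdge_append (hz : G.edges z z = ∅) {x y : V} {e : E} {l : List E}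
    (hx : x ≠ z) (hy : y ≠ z) (h : G.IsPath x y (e :: l)) :
    ∃ (a : G.proj1E z) (k : List E), e :: l = G.expandEdge z a ++ k := by
  obtain ⟨rfl, hl⟩ := h
  by_cases he : G.hd e = z
  · cases l with
    | nil => exact absurd (hl.symm.trans he) hy
    | cons f k =>
      have hf : G.tl f = z := hl.1.trans he
      have hf' : G.hd f ≠ z := fun hf' => Set.eq_empty_iff_forall_notMem.mp hz f ⟨hf, hf'⟩
      exact ⟨Sum.inr ⟨(e, f), he, hf, hx, hf'⟩, k, rfl⟩
  · exact ⟨Sum.inl ⟨e, hx, he⟩, l, rfl⟩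

theorem IsPath.exists_expand_eq (hz : G.edges z z = ∅) {x y : V} {l : List E}
    (hx : x ≠ z) (hy : y ≠ z) (h : G.IsPath x y l) : ∃ m, G.expand z m = l := by
  induction hn : l.length using Nat.strong_induction_on generalizing x l with
  | _ n ih =>
    cases l with
    | nil => exact ⟨[], rfl⟩
    | cons e l =>
      obtain ⟨a, k, hk⟩ := h.exists_eq_expandEdge_append hz hx hy
      rw [hk] at h hn ⊢
      have hlt : k.length < n := by
        have := List.length_pos_iff.mpr (expandEdge_ne_nil a)
        rw [List.length_append] at hn
        omega
      obtain ⟨m, rfl⟩ := ih _ hlt ((G.proj1 z).hd a).2 (isPath_expandEdge_append.mp h).2 rfl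
      exact ⟨a :: m, expand_cons a m⟩

theorem bijOn_expand (hz : G.edges z z = ∅) (x y : {v : V // v ≠ z}) :
    Set.BijOn (G.expand z) {m | (G.proj1 z).IsPath x y m} {l | G.IsPath x y l} := by
  refine ⟨fun m hm => isPath_expand.mpr hm, expand_injective.injOn, fun l hl => ?_⟩
  obtain ⟨m, rfl⟩ := IsPath.exists_expand_eq hz x.2 y.2 hl
  exact ⟨m, isPath_expand.mp hl, rfl⟩

theorem reaches_proj1 (hz : G.edges z z = ∅) (x y : {v : V // v ≠ z}) :
    (G.proj1 z).Reaches x y ↔ G.Reaches x y := by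
  refine ⟨fun ⟨m, hm⟩ => ⟨G.expand z m, isPath_expand.mpr hm⟩, fun ⟨l, hl⟩ => ?_⟩
  obtain ⟨m, hm, -⟩ := (bijOn_expand hz x y).surjOn hl
  exact ⟨m, hm⟩

theorem encard_paths_proj1 (hz : G.edges z z = ∅) (x y : {v : V // v ≠ z}) :
    {m | (G.proj1 z).IsPath x y m}.encard = {l | G.IsPath x y l}.encard :=
  Set.encard_congr ((bijOn_expand hz x y).equiv _)

theorem IsDAMG.edges_self (hG : G.IsDAMG) (x : V) : G.edges x x = ∅ := by
  obtain ⟨ord, -, hord⟩ := hG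
  refine Set.eq_empty_iff_forall_notMem.mpr fun e ⟨ht, hh⟩ => (hord e).ne ?_
  rw [ht, hh]

end Projection

end MGraph

/-- The paths are counted in `ℕ∞` because there may be infinitely many of them, in which case
`nPaths` is `0`. -/
theorem proj1_paths_anc_desc_general {V E : Type*} (G : MGraph V E) {z : V}
    (hz : G.edges z z = ∅) :
    (∀ x y : {v : V // v ≠ z},
      Set.BijOn (G.expand z) {m | (G.proj1 z).IsPath x y m} {l | G.IsPath x y l}) ∧
    (∀ y x : {v : V // v ≠ z}, x ∈ (G.proj1 z).anc y ↔ (x : V) ∈ G.anc y) ∧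
    (∀ x y : {v : V // v ≠ z}, y ∈ (G.proj1 z).desc x ↔ (y : V) ∈ G.desc x) ∧
    (∀ x y : {v : V // v ≠ z},
      {m | (G.proj1 z).IsPath x y m}.encard = {l | G.IsPath x y l}.encard) :=
  ⟨MGraph.bijOn_expand hz, fun y x => MGraph.reaches_proj1 hz x y, MGraph.reaches_proj1 hz,
    MGraph.encard_paths_proj1 hz⟩

/-- **Directed paths and ancestral relationships are stable under projection.**
For a DAMG `G`, `z ∈ V` and `x, y ∈ V∖{z}`: the directed paths from `x` to `y`
in `G` are in bijection with those in `G^{∖z}`, hence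
`Anc^{G^{∖z}}(y) = Anc^G(y)∖{z}`, `Desc^{G^{∖z}}(x) = Desc^G(x)∖{z}` and
`π^{G^{∖z}}(x,y) = π^G(x,y)`. -/
theorem proj1_paths_anc_desc
    {V E : Type*} [Finite V] [Finite E]
    (G : MGraph V E) (hG : G.IsDAMG) (z : V) :
    (∀ (x y : V) (hx : x ≠ z) (hy : y ≠ z),
      Nonempty ({l : List E // G.IsPath x y l} ≃
        {l : List (G.proj1E z) // (G.proj1 z).IsPath ⟨x, hx⟩ ⟨y, hy⟩ l})) ∧
    (∀ (y : V) (hy : y ≠ z) (x : V) (hx : x ≠ z),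
      (⟨x, hx⟩ : {x : V // x ≠ z}) ∈ (G.proj1 z).anc ⟨y, hy⟩ ↔ x ∈ G.anc y) ∧
    (∀ (x : V) (hx : x ≠ z) (y : V) (hy : y ≠ z),
      (⟨y, hy⟩ : {x : V // x ≠ z}) ∈ (G.proj1 z).desc ⟨x, hx⟩ ↔ y ∈ G.desc x) ∧
    (∀ (x y : V) (hx : x ≠ z) (hy : y ≠ z),
      (G.proj1 z).nPaths ⟨x, hx⟩ ⟨y, hy⟩ = G.nPaths x y) := by
  obtain ⟨paths, anc, desc, count⟩ := proj1_paths_anc_desc_general G (hG.edges_self z)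
  exact ⟨fun x y hx hy => ⟨((paths ⟨x, hx⟩ ⟨y, hy⟩).equiv _).symm⟩,
    fun y hy x hx => anc ⟨y, hy⟩ ⟨x, hx⟩, fun x hx y hy => desc ⟨x, hx⟩ ⟨y, hy⟩,
    fun x y hx hy => congrArg ENat.toNat (count ⟨x, hx⟩ ⟨y, hy⟩)⟩
end

section
/- Let G = (V,E) be a DAMG, R a commutative ring, q : E → R a normalized weight function, and z ∈ V such that z ∉ Rt(G)∖Lf(G) (i.e. z is not a root, or z is simultaneously a root and a leaf). Then the projected weight function q^{∖z} is a normalized weight function on the projected DAMG G^{∖z}. -/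
open scoped Classical

/-!
Since `q^{∖z}(x|y) = q(x|y) + q(x|z) q(z|y)`, summing over `x ≠ z` gives
`Σ_{x ≠ z} q^{∖z}(x|y) = (Σ_x q(x|y) - q(z|y)) + (Σ_x q(x|z) - q(z|z)) q(z|y)`. Here `q(z|z) = 0`
because `G` has no loops. If `z` is not a root, then `Σ_x q(x|z) = 1` and the two terms `q(z|y)`
cancel; if `z` is a leaf, then `q(z|y) = 0`. In both cases what is left is `Σ_x q(x|y) = 1`.
-/

lemma finsum_subtype_ne_add {α M : Type*} [AddCommMonoid M] {f : α → M}
    (hf : f.support.Finite) (a : α) : (∑ᶠ x : {x // x ≠ a}, f x) + f a = ∑ᶠ x, f x := by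
  calc (∑ᶠ x : {x // x ≠ a}, f x) + f a
      = f a + ∑ᶠ x ∈ ({a}ᶜ : Set α), f x := by
        rw [add_comm, ← finsum_set_coe_eq_finsum_mem]
        rfl
    _ = ∑ᶠ x ∈ insert a ({a}ᶜ : Set α), f x :=
        (finsum_mem_insert' f (by simp) (hf.inter_of_right _)).symm
    _ = ∑ᶠ x, f x := by
        rw [Set.insert_eq, Set.union_compl_self, finsum_mem_univ]

namespace MGraph

variable {V E R : Type*} {G : MGraph V E}

section Weights

variable [AddCommMonoid R]

lemma pw_eq_zero_of_edges_eq_empty {x y : V} (h : G.edges x y = ∅) (q : E → R) :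
    G.pw q x y = 0 := by
  rw [pw, h, finsum_mem_empty]

lemma pw_eq_zero_of_mem_leaves {x : V} (hx : x ∈ G.leaves) (q : E → R) (y : V) :
    G.pw q x y = 0 :=
  pw_eq_zero_of_edges_eq_empty (Set.eq_empty_of_forall_notMem fun e he => hx e he.1) q

lemma IsDAMG.pw_self (hG : G.IsDAMG) (q : E → R) (x : V) : G.pw q x x = 0 := by
  obtain ⟨ord, -, hord⟩ := hG
  refine pw_eq_zero_of_edges_eq_empty (Set.eq_empty_of_forall_notMem fun e he => ?_) q
  exact (hord e).ne (congrArg ord (he.1.trans he.2.symm))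

lemma finite_support_pw {y : V} (hy : (G.hd ⁻¹' {y}).Finite) (q : E → R) :
    (Function.support fun x => G.pw q x y).Finite := by
  refine (hy.image G.tl).subset fun x hx => ?_
  obtain ⟨e, he⟩ : (G.edges x y).Nonempty :=
    Set.nonempty_iff_ne_empty.2 fun h => hx (pw_eq_zero_of_edges_eq_empty h q)
  exact ⟨e, he.2, he.1⟩

end Weights

lemma mem_roots_iff {y : V} : y ∈ G.roots ↔ ∀ e, G.hd e ≠ y := by
  refine Set.eq_empty_iff_forall_notMem.trans ⟨fun h e he => h (G.tl e) ⟨e, rfl, he⟩, ?_⟩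
  rintro h x ⟨e, -, he⟩
  exact h e he

lemma mem_roots_proj1 {z : V} {y : {x : V // x ≠ z}} (hy : y.1 ∈ G.roots) :
    y ∈ (G.proj1 z).roots := by
  rw [mem_roots_iff] at hy ⊢
  rintro (e | p) he
  · exact hy e.1 (congrArg Subtype.val he)
  · exact hy p.1.2 (congrArg Subtype.val he)

/-- The defining decomposition `E^{∖z}(x,y) = E(x,y) ⊔ (E(x,z) × E(z,y))` of the edge sets of the
projection, as an equivalence: `proj1` itself only has one edge type for all pairs `(x,y)`. -/
def proj1EdgesEquiv (G : MGraph V E) (z : V) (x y : {x : V // x ≠ z}) :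
    (G.proj1 z).edges x y ≃ G.edges x.1 y.1 ⊕ G.edges x.1 z × G.edges z y.1 where
  toFun
    | ⟨.inl e, h⟩ => .inl ⟨e.1, congrArg Subtype.val h.1, congrArg Subtype.val h.2⟩
    | ⟨.inr p, h⟩ =>
      .inr (⟨p.1.1, congrArg Subtype.val h.1, p.2.1⟩,
        ⟨p.1.2, p.2.2.1, congrArg Subtype.val h.2⟩)
  invFun
    | .inl e =>
      ⟨.inl ⟨e.1, e.2.1.trans_ne x.2, e.2.2.trans_ne y.2⟩, Subtype.ext e.2.1, Subtype.ext e.2.2⟩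
    | .inr (e, f) =>
      ⟨.inr ⟨(e.1, f.1), e.2.2, f.2.1, e.2.1.trans_ne x.2, f.2.2.trans_ne y.2⟩,
        Subtype.ext e.2.1, Subtype.ext f.2.2⟩
  left_inv := by rintro ⟨_ | _, _⟩ <;> rfl
  right_inv := by rintro (_ | ⟨_, _⟩) <;> rfl

variable [CommRing R]

lemma pw_proj1 {z : V} {x y : {x : V // x ≠ z}} (hxy : (G.edges x.1 y.1).Finite)
    (hxz : (G.edges x.1 z).Finite) (hzy : (G.edges z y.1).Finite) (q : E → R) :
    (G.proj1 z).pw (G.proj1Q z q) x y = G.pw q x.1 y.1 + G.pw q x.1 z * G.pw q z y.1 := by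
  have := hxy.fintype
  have := hxz.fintype
  have := hzy.fintype
  simp only [pw, ← finsum_set_coe_eq_finsum_mem]
  rw [← finsum_comp_equiv (G.proj1EdgesEquiv z x y).symm]
  simp only [finsum_eq_sum_of_fintype, Fintype.sum_sum_type, Fintype.sum_prod_type,
    Fintype.sum_mul_sum]
  rfl

lemma finsum_pw_proj1 {z : V} {y : {x : V // x ≠ z}} (hy : (G.hd ⁻¹' {y.1}).Finite)
    (hz : (G.hd ⁻¹' {z}).Finite) (q : E → R) :
    ∑ᶠ x, (G.proj1 z).pw (G.proj1Q z q) x y =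
      ((∑ᶠ x, G.pw q x y.1) - G.pw q z y.1) +
        ((∑ᶠ x, G.pw q x z) - G.pw q z z) * G.pw q z y.1 := by
  have hedges {x w : V} (hw : (G.hd ⁻¹' {w}).Finite) : (G.edges x w).Finite :=
    hw.subset fun _ he => he.2
  have hsupp {w : V} (hw : (G.hd ⁻¹' {w}).Finite) :
      (Function.support fun x : {x : V // x ≠ z} => G.pw q x.1 w).Finite :=
    (finite_support_pw hw q).preimage Subtype.val_injective.injOn
  calc ∑ᶠ x, (G.proj1 z).pw (G.proj1Q z q) x y
      = ∑ᶠ x : {x : V // x ≠ z}, (G.pw q x.1 y.1 + G.pw q x.1 z * G.pw q z y.1) :=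
        finsum_congr fun x => pw_proj1 (hedges hy) (hedges hz) (hedges hy) q
    _ = (∑ᶠ x : {x : V // x ≠ z}, G.pw q x.1 y.1) +
          (∑ᶠ x : {x : V // x ≠ z}, G.pw q x.1 z) * G.pw q z y.1 := by
        rw [finsum_mul' _ _ (hsupp hz)]
        exact finsum_add_distrib (hsupp hy)
          ((hsupp hz).subset (Function.support_mul_subset_left _ _))
    _ = _ := by
        rw [← finsum_subtype_ne_add (finite_support_pw hy q) z,
          ← finsum_subtype_ne_add (finite_support_pw hz q) z, add_sub_cancel_right,
          add_sub_cancel_right]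

end MGraph

theorem proj1_normalized_general
    {V E R : Type*} [CommRing R]
    (G : MGraph V E) (hfin : ∀ y : V, (G.hd ⁻¹' {y}).Finite)
    (q : E → R) (hq : G.Normalized q)
    (z : V) (hloop : G.pw q z z = 0) (hz : z ∉ G.roots \ G.leaves) :
    (G.proj1 z).Normalized (G.proj1Q z q) := by
  intro y hy
  have hy_sum : ∑ᶠ x, G.pw q x y.1 = 1 := hq y.1 fun h => hy (MGraph.mem_roots_proj1 h)
  rw [MGraph.finsum_pw_proj1 (hfin y.1) (hfin z), hy_sum, hloop, sub_zero]
  by_cases hroot : z ∈ G.roots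
  · have hleaf : z ∈ G.leaves := not_not.1 fun h => hz ⟨hroot, h⟩
    rw [MGraph.pw_eq_zero_of_mem_leaves hleaf, sub_zero, mul_zero, add_zero]
  · rw [hq z hroot, one_mul, sub_add_cancel]

/-- **Normalized weight functions are stable under projection.**
If `q` is a normalized weight function on the DAMG `G` and `z ∉ Rt(G)∖Lf(G)`,
then the projected weight function `q^{∖z}` is a normalized weight function on
the projected DAMG `G^{∖z}`. -/
theorem proj1_normalized
    {V E R : Type*} [Finite V] [Finite E] [CommRing R]
    (G : MGraph V E) (hG : G.IsDAMG)
    (q : E → R) (hq : G.Normalized q)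
    (z : V) (hz : z ∉ G.roots \ G.leaves) :
    (G.proj1 z).Normalized (G.proj1Q z q) :=
  proj1_normalized_general G (fun _ => Set.toFinite _) q hq z (hG.pw_self q z) hz
end
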